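/- Let D_k ⊂ [0,h] be a set of k distinct integers with S(D_k) ≠ 0, and let 1 ≤ H ≤ h. Then ∑_{1 ≤ d_0 ≤ H, d_0 ∉ D_k} S(D_k ∪ {d_0}) = S(D_k) · H · (1 + O_k(h^ε / H^{1/2})), where the implied constant depends only on k and ε. -/

import Mathlib

open Finset

/-- Number of residue classes mod `p` occupied by the elements of `D`. -/
def nu (D : Finset ℕ) (p : ℕ) : ℕ := (D.image (· % p)).card

/-- The Hardy–Littlewood singular series of a finite set `D`. -/
noncomputable def singSeries (D : Finset ℕ) : ℝ :=
  ∏' p : Nat.Primes, ((1 - 1 / ((p : ℕ) : ℝ)) ^ D.card)⁻¹ * (1 - (nu D (p : ℕ) : ℝ) / ((p : ℕ) : ℝ))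

/-- `primePi x D` counts positive integers `m ≤ x` with `m + d` prime for all `d ∈ D`. -/
noncomputable def primePi (x : ℝ) (D : Finset ℕ) : ℕ :=
  {m : ℕ | 0 < m ∧ (m : ℝ) ≤ x ∧ ∀ d ∈ D, Nat.Prime (m + d)}.ncard

/-- `Ncham x D` counts `n` such that `p_{n+k} ≤ x` and the gaps `p_{n+i} - p_n` for
`i = 1, …, k` are exactly the elements of `D` (with `k = D.card`). -/
noncomputable def Ncham (x : ℝ) (D : Finset ℕ) : ℕ :=
  {n : ℕ | ((Nat.nth Nat.Prime (n + D.card) : ℝ) ≤ x) ∧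
    (Finset.range D.card).image
      (fun i => Nat.nth Nat.Prime (n + i + 1) - Nat.nth Nat.Prime n) = D}.ncard

/-- `D` is a `k`-tuple jumping champion for `x`. -/
def IsChampion (k : ℕ) (x : ℝ) (D : Finset ℕ) : Prop :=
  D.card = k ∧ (∀ d ∈ D, 0 < d) ∧
    ∀ D' : Finset ℕ, D'.card = k → (∀ d ∈ D', 0 < d) → Ncham x D' ≤ Ncham x D

/-- Number of prime factors counted with multiplicity. -/
def bigOmega (n : ℕ) : ℕ := n.primeFactorsList.length

/-- The `n`-th primorial `2·3·5⋯p_n`. -/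
noncomputable def primorial' (n : ℕ) : ℕ := ∏ i ∈ Finset.range n, Nat.nth Nat.Prime i

/-- The largest primorial not exceeding `y` (equal to `1` if `y < 1`). -/
noncomputable def largestPrimorial (y : ℝ) : ℕ :=
  primorial' (sSup {n : ℕ | (primorial' n : ℝ) ≤ y})

/-!
Truncate every singular series to a finite set `T` of primes. Adjoining `d` to `D` multiplies the
truncated product by `∏ p ∈ T, (1 + a_p(d))`, where `a_p` has period `p` and, by the identity
`a(p, ν) ν + a(p, ν + 1) (p - ν) = 0`, mean zero. Expand this product over the squarefree moduli
`q` composed of primes in `T`. The modulus `1` gives the main term `H`. For `1 < q ≤ H`, the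
Chinese remainder theorem and the mean-zero property bound the sum over `d` by a product over
`p ∣ q` of factors `O_k(1 / p)`. For `q > H` one takes absolute values: `a_p(d) = O_k(p⁻²)` unless
`p` divides `∏ e ∈ D, |d - e|`, which has few prime factors and costs only `O(h ^ ε)`. Inserting a
factor `√(H / q)` or `√(q / H)` respectively leaves a convergent product over primes, so the error
is `O(h ^ ε √H)` uniformly in `T`.
-/

open Function Filter Topology

section PeriodicSums

theorem periodic_finset_prod {ι R : Type*} [CommMonoid R] {s : Finset ι} {m : ι → ℕ}
    {f : ι → ℕ → R} (hf : ∀ i ∈ s, Periodic (f i) (m i)) :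
    Periodic (fun x => ∏ i ∈ s, f i x) (∏ i ∈ s, m i) := by
  intro x
  refine prod_congr rfl fun i hi => ?_
  obtain ⟨c, hc⟩ := dvd_prod_of_mem m hi
  rw [hc, mul_comm, ← smul_eq_mul]
  exact (hf i hi).nsmul c x

theorem sum_range_mul_of_coprime {R : Type*} [CommSemiring R] {m n : ℕ} (hmn : m.Coprime n)
    {f g : ℕ → R} (hf : Periodic f m) (hg : Periodic g n) :
    ∑ x ∈ range (m * n), f x * g x = (∑ x ∈ range m, f x) * ∑ x ∈ range n, g x := by
  have h_maps : Set.MapsTo (fun x => (x % m, x % n)) (range (m * n))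
      (range m ×ˢ range n : Finset (ℕ × ℕ)) := by
    intro x hx
    have hpos : 0 < m * n := Nat.zero_lt_of_lt (mem_range.1 hx)
    exact mem_product.2 ⟨mem_range.2 (Nat.mod_lt _ (Nat.pos_of_mul_pos_right hpos)),
      mem_range.2 (Nat.mod_lt _ (Nat.pos_of_mul_pos_left hpos))⟩
  have h_inj : Set.InjOn (fun x => (x % m, x % n)) (range (m * n)) := by
    intro x hx y hy hxy
    obtain ⟨hm, hn⟩ := Prod.mk.inj hxy
    exact ((Nat.modEq_and_modEq_iff_modEq_mul hmn).1 ⟨hm, hn⟩).eq_of_lt_of_lt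
      (mem_range.1 hx) (mem_range.1 hy)
  rw [sum_mul_sum, ← sum_product']
  refine sum_nbij _ h_maps h_inj (surjOn_of_injOn_of_card_le _ h_maps h_inj ?_) fun x _ => ?_
  · simp only [card_product, card_range, le_refl]
  · rw [hf.map_mod_nat, hg.map_mod_nat]

theorem sum_range_prod_of_pairwise_coprime {ι R : Type*} [CommSemiring R] {s : Finset ι}
    {m : ι → ℕ} (hm : (s : Set ι).Pairwise (Nat.Coprime on m)) {f : ι → ℕ → R}
    (hf : ∀ i ∈ s, Periodic (f i) (m i)) :
    ∑ x ∈ range (∏ i ∈ s, m i), ∏ i ∈ s, f i x = ∏ i ∈ s, ∑ x ∈ range (m i), f i x := by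
  classical
  induction s using Finset.induction_on with
  | empty => simp
  | insert i s hi ih =>
    have h_coprime : (m i).Coprime (∏ j ∈ s, m j) := Nat.Coprime.prod_right fun j hj =>
      hm (mem_insert_self i s) (mem_insert_of_mem hj) (ne_of_mem_of_not_mem hj hi).symm
    obtain ⟨hfi, hfs⟩ := forall_mem_insert _ _ _ |>.1 hf
    simp only [prod_insert hi]
    rw [sum_range_mul_of_coprime h_coprime hfi (periodic_finset_prod hfs),
      ih (hm.mono (coe_subset.2 (subset_insert i s))) hfs]

variable {E : Type*} [SeminormedAddCommGroup E] {f : ℕ → E} {q : ℕ}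

theorem norm_sum_range_le_of_periodic (hq : 0 < q) (hf : Periodic f q)
    (hzero : ∑ x ∈ range q, f x = 0) (N : ℕ) :
    ‖∑ x ∈ range N, f x‖ ≤ ∑ x ∈ range q, ‖f x‖ := by
  induction N using Nat.strong_induction_on with
  | _ N ih =>
    obtain hNq | hqN := lt_or_ge N q
    · exact (norm_sum_le _ _).trans <| sum_le_sum_of_subset_of_nonneg
        (range_subset_range.2 hNq.le) fun _ _ _ => norm_nonneg _
    · obtain ⟨M, rfl⟩ := Nat.exists_eq_add_of_le hqN
      have h_shift : ∀ x, f (q + x) = f x := fun x => by rw [add_comm, hf x]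
      simp only [sum_range_add, hzero, zero_add, h_shift]
      exact ih M (by lia)

theorem norm_sum_Icc_one_le_of_periodic (hq : 0 < q) (hf : Periodic f q)
    (hzero : ∑ x ∈ range q, f x = 0) (N : ℕ) :
    ‖∑ x ∈ Icc 1 N, f x‖ ≤ 2 * ∑ x ∈ range q, ‖f x‖ := by
  have h_split : ∑ x ∈ Icc 1 N, f x = ∑ x ∈ range (N + 1), f x - ∑ x ∈ range 1, f x := by
    rw [sum_range_eq_add_Ico f N.succ_pos, sum_range_one, add_sub_cancel_left,
      Nat.succ_eq_add_one, Ico_add_one_right_eq_Icc]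
  calc ‖∑ x ∈ Icc 1 N, f x‖ ≤ ‖∑ x ∈ range (N + 1), f x‖ + ‖∑ x ∈ range 1, f x‖ := by
        rw [h_split]; exact norm_sub_le _ _
    _ ≤ ∑ x ∈ range q, ‖f x‖ + ∑ x ∈ range q, ‖f x‖ :=
        add_le_add (norm_sum_range_le_of_periodic hq hf hzero _)
          (norm_sum_range_le_of_periodic hq hf hzero _)
    _ = 2 * ∑ x ∈ range q, ‖f x‖ := (two_mul _).symm

end PeriodicSums

section Rankin

variable {ι : Type*} {m b : ι → ℝ} {y : ℝ}

-- Rankin's trick: `√(y / ∏ m)` is at least `1` on the summation range.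
theorem sum_powerset_prod_le_le_sqrt_mul (T : Finset ι) (hm : ∀ i, 0 < m i) (hb : ∀ i, 0 ≤ b i) :
    ∑ s ∈ T.powerset with ∏ i ∈ s, m i ≤ y, ∏ i ∈ s, b i ≤ √y * ∏ i ∈ T, (1 + b i / √(m i)) := by
  have hnonneg : ∀ s : Finset ι, 0 ≤ ∏ i ∈ s, b i / √(m i) := fun s =>
    prod_nonneg fun i _ => div_nonneg (hb i) (Real.sqrt_nonneg _)
  rw [prod_one_add, mul_sum]
  refine (sum_le_sum fun s hs => ?_).trans <| sum_le_sum_of_subset_of_nonneg (filter_subset _ _)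
    fun s _ _ => mul_nonneg (Real.sqrt_nonneg y) (hnonneg s)
  calc ∏ i ∈ s, b i = √(∏ i ∈ s, m i) * ∏ i ∈ s, b i / √(m i) := by
        rw [Real.sqrt_prod _ fun i _ => (hm i).le, ← prod_mul_distrib]
        exact prod_congr rfl fun i _ => (mul_div_cancel₀ _ (Real.sqrt_pos.2 (hm i)).ne').symm
    _ ≤ √y * ∏ i ∈ s, b i / √(m i) :=
        mul_le_mul_of_nonneg_right (Real.sqrt_le_sqrt (mem_filter.1 hs).2) (hnonneg s)

theorem sqrt_mul_sum_powerset_lt_prod_le (T : Finset ι) (hm : ∀ i, 0 ≤ m i) (hb : ∀ i, 0 ≤ b i) :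
    √y * ∑ s ∈ T.powerset with y < ∏ i ∈ s, m i, ∏ i ∈ s, b i ≤ ∏ i ∈ T, (1 + √(m i) * b i) := by
  rw [prod_one_add, mul_sum]
  refine (sum_le_sum fun s hs => ?_).trans <| sum_le_sum_of_subset_of_nonneg (filter_subset _ _)
    fun s _ _ => prod_nonneg fun i _ => mul_nonneg (Real.sqrt_nonneg _) (hb i)
  rw [prod_mul_distrib, ← Real.sqrt_prod _ fun i _ => hm i]
  exact mul_le_mul_of_nonneg_right (Real.sqrt_le_sqrt (mem_filter.1 hs).2.le)
    (prod_nonneg fun i _ => hb i)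

end Rankin

section Primes

theorem exists_prod_one_add_mul_rpow_le {r c : ℝ} (hr : r < -1) (hc : 0 ≤ c) :
    ∃ M : ℝ, 0 < M ∧ ∀ T : Finset Nat.Primes, ∏ p ∈ T, (1 + c * ((p : ℕ) : ℝ) ^ r) ≤ M := by
  have hsum : Summable fun p : Nat.Primes => c * ((p : ℕ) : ℝ) ^ r :=
    (Nat.Primes.summable_rpow.2 hr).mul_left c
  have hnonneg : ∀ p : Nat.Primes, 0 ≤ c * ((p : ℕ) : ℝ) ^ r := fun p => by positivity
  refine ⟨Real.exp (∑' p : Nat.Primes, c * ((p : ℕ) : ℝ) ^ r), Real.exp_pos _, fun T =>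
    (Real.prod_one_add_le_exp_sum T hnonneg).trans ?_⟩
  exact Real.exp_le_exp.2 (hsum.sum_le_tsum T fun p _ => hnonneg p)

theorem exists_pow_card_primeFactors_le {c δ : ℝ} (hc : 1 ≤ c) (hδ : 0 < δ) :
    ∃ M : ℝ, 0 < M ∧ ∀ n : ℕ, n ≠ 0 → c ^ #n.primeFactors ≤ M * (n : ℝ) ^ δ := by
  obtain ⟨P, hP⟩ := eventually_atTop.1 <|
    ((tendsto_rpow_atTop hδ).comp tendsto_natCast_atTop_atTop).eventually_ge_atTop c
  refine ⟨c ^ P, by positivity, fun n hn => ?_⟩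
  have h_factor : ∀ p ∈ n.primeFactors, c ≤ (if p < P then c else 1) * (p : ℝ) ^ δ := by
    intro p hp
    split_ifs with hpP
    · exact le_mul_of_one_le_right (by positivity) <|
        Real.one_le_rpow (mod_cast (Nat.prime_of_mem_primeFactors hp).one_lt.le) hδ.le
    · rw [one_mul]
      exact hP p (not_lt.1 hpP)
  have h_small : ∏ p ∈ n.primeFactors, (if p < P then c else 1) ≤ c ^ P := by
    rw [← prod_filter, prod_const]
    refine pow_le_pow_right₀ hc ?_
    have : {p ∈ n.primeFactors | p < P} ⊆ range P := fun p hp => mem_range.2 (mem_filter.1 hp).2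
    simpa only [card_range] using card_le_card this
  have h_rad : ∏ p ∈ n.primeFactors, (p : ℝ) ^ δ ≤ (n : ℝ) ^ δ := by
    rw [Real.finsetProd_rpow _ _ fun p _ => p.cast_nonneg, ← Nat.cast_prod]
    gcongr
    exact Nat.le_of_dvd (Nat.pos_of_ne_zero hn) (Nat.prod_primeFactors_dvd n)
  calc c ^ #n.primeFactors = ∏ _ ∈ n.primeFactors, c := (prod_const c).symm
    _ ≤ ∏ p ∈ n.primeFactors, (if p < P then c else 1) * (p : ℝ) ^ δ :=
        prod_le_prod (fun _ _ => by positivity) h_factor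
    _ = (∏ p ∈ n.primeFactors, if p < P then c else 1) * ∏ p ∈ n.primeFactors, (p : ℝ) ^ δ :=
        prod_mul_distrib
    _ ≤ c ^ P * (n : ℝ) ^ δ :=
        mul_le_mul h_small h_rad (prod_nonneg fun _ _ => by positivity) (by positivity)

theorem prod_ite_dvd_le_pow_card_primeFactors {c : ℝ} (hc : 1 ≤ c) {n : ℕ} (hn : n ≠ 0)
    (T : Finset Nat.Primes) :
    ∏ p ∈ T, (if (p : ℕ) ∣ n then c else 1) ≤ c ^ #n.primeFactors := by
  rw [← prod_filter, prod_const]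
  refine pow_le_pow_right₀ hc (card_le_card_of_injOn (fun p => (p : ℕ)) (fun p hp => ?_)
    Nat.Primes.coe_nat_injective.injOn)
  exact Nat.mem_primeFactors.2 ⟨p.2, (mem_filter.1 hp).2, hn⟩

end Primes

section RealInequalities

theorem sqrt_div_sq_eq_rpow {x : ℝ} (hx : 0 < x) : √x / x ^ 2 = x ^ (-(3 / 2) : ℝ) := by
  rw [Real.sqrt_eq_rpow, ← Real.rpow_natCast, ← Real.rpow_sub hx]
  norm_num

theorem inv_div_sqrt_eq_rpow {x : ℝ} (hx : 0 < x) : x⁻¹ / √x = x ^ (-(3 / 2) : ℝ) := by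
  rw [Real.sqrt_eq_rpow, ← Real.rpow_neg_one, ← Real.rpow_sub hx]
  norm_num

theorem one_div_sub_one_le {x : ℝ} (hx : 2 ≤ x) : 1 / (x - 1) ≤ 2 / x := by
  rw [div_le_div_iff₀ (by linarith) (by linarith)]
  linarith

theorem one_sub_pow_le (k : ℕ) {x : ℝ} (hx0 : 0 ≤ x) (hx1 : x ≤ 1) :
    (1 - x) ^ k ≤ 1 - k * x + k ^ 2 * x ^ 2 := by
  induction k with
  | zero => simp
  | succ k ih =>
    calc (1 - x) ^ (k + 1) ≤ (1 - k * x + k ^ 2 * x ^ 2) * (1 - x) := by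
          rw [pow_succ]
          exact mul_le_mul_of_nonneg_right ih (sub_nonneg.2 hx1)
      _ = 1 - (k + 1) * x + (k ^ 2 + k) * x ^ 2 - k ^ 2 * x ^ 3 := by ring
      _ ≤ 1 - (k + 1) * x + (k + 1) ^ 2 * x ^ 2 - 0 := by
          gcongr
          · nlinarith [k.cast_nonneg (α := ℝ)]
          · positivity
      _ = 1 - (k + 1 : ℕ) * x + (k + 1 : ℕ) ^ 2 * x ^ 2 := by push_cast; ring

theorem abs_inv_one_sub_pow_mul_sub_one_le (k : ℕ) {x : ℝ} (hx0 : 0 ≤ x) (hx1 : x ≤ 1 / 2) :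
    |((1 - x) ^ k)⁻¹ * (1 - k * x) - 1| ≤ k ^ 2 * 2 ^ k * x ^ 2 := by
  have hpos : 0 < (1 - x) ^ k := pow_pos (by linarith) k
  have h_lower : 1 ≤ 2 ^ k * (1 - x) ^ k := by
    rw [← mul_pow]
    exact one_le_pow₀ (by linarith)
  have h_bernoulli : 1 - k * x ≤ (1 - x) ^ k := by
    simpa only [mul_neg, ← sub_eq_add_neg] using
      one_add_mul_le_pow (show -2 ≤ -x by linarith) k
  have h_num : |(1 - k * x) - (1 - x) ^ k| ≤ k ^ 2 * x ^ 2 := by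
    rw [abs_sub_comm, abs_of_nonneg (sub_nonneg.2 h_bernoulli)]
    linarith [one_sub_pow_le k hx0 (by linarith)]
  have h_quot : ((1 - x) ^ k)⁻¹ * (1 - k * x) - 1 =
      ((1 - k * x) - (1 - x) ^ k) / (1 - x) ^ k := by field_simp
  calc |((1 - x) ^ k)⁻¹ * (1 - k * x) - 1| = |(1 - k * x) - (1 - x) ^ k| / (1 - x) ^ k := by
        rw [h_quot, abs_div, abs_of_pos hpos]
    _ ≤ k ^ 2 * x ^ 2 / (1 - x) ^ k := by gcongr
    _ ≤ k ^ 2 * 2 ^ k * x ^ 2 := by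
        rw [div_le_iff₀ hpos]
        nlinarith [mul_le_mul_of_nonneg_left h_lower (by positivity : (0 : ℝ) ≤ k ^ 2 * x ^ 2)]

end RealInequalities

section ResidueClasses

variable {D : Finset ℕ} {p : ℕ}

theorem nu_le_card (D : Finset ℕ) (p : ℕ) : nu D p ≤ #D := card_image_le

theorem image_mod_subset_range (D : Finset ℕ) (hp : 0 < p) : D.image (· % p) ⊆ range p :=
  image_subset_iff.2 fun _ _ => mem_range.2 (Nat.mod_lt _ hp)

theorem nu_le (D : Finset ℕ) (hp : 0 < p) : nu D p ≤ p := by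
  simpa only [nu, card_range] using card_le_card (image_mod_subset_range D hp)

theorem nu_eq_card_of_forall_lt (h : ∀ d ∈ D, d < p) : nu D p = #D :=
  card_image_of_injOn fun x hx y hy hxy => Nat.ModEq.eq_of_lt_of_lt hxy (h x hx) (h y hy)

theorem nu_insert (D : Finset ℕ) (p d : ℕ) :
    nu (insert d D) p = if d % p ∈ D.image (· % p) then nu D p else nu D p + 1 := by
  rw [nu, image_insert, card_insert_eq_ite, nu]

theorem sum_range_ite_mem_image_mod (D : Finset ℕ) (hp : 0 < p) (x y : ℝ) :
    ∑ r ∈ range p, (if r % p ∈ D.image (· % p) then x else y) = nu D p * x + (p - nu D p) * y := by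
  have h_mod : ∀ r ∈ range p, (if r % p ∈ D.image (· % p) then x else y) =
      (if r ∈ D.image (· % p) then x - y else 0) + y := by
    intro r hr
    rw [Nat.mod_eq_of_lt (mem_range.1 hr)]
    split_ifs <;> ring
  rw [sum_congr rfl h_mod, sum_add_distrib, sum_ite_mem,
    inter_eq_right.2 (image_mod_subset_range D hp), sum_const, sum_const, card_range, ← nu,
    nsmul_eq_mul, nsmul_eq_mul]
  ring

/-- The product of the distances from `d` to the elements of `D`; the primes dividing it are those
modulo which `d` falls into a residue class occupied by `D`. -/
def differenceProd (D : Finset ℕ) (d : ℕ) : ℕ := ∏ e ∈ D, ((d : ℤ) - e).natAbs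

theorem differenceProd_ne_zero {d : ℕ} (hd : d ∉ D) : differenceProd D d ≠ 0 :=
  prod_ne_zero_iff.2 fun e he => by
    have : d ≠ e := fun hde => hd (hde ▸ he)
    lia

theorem differenceProd_le_pow {d h : ℕ} (hD : ∀ e ∈ D, e ≤ h) (hd : d ≤ h) :
    differenceProd D d ≤ h ^ #D :=
  prod_le_pow_card _ _ _ fun e he => by
    have := hD e he
    lia

theorem prime_dvd_differenceProd_iff (hp : p.Prime) (d : ℕ) :
    p ∣ differenceProd D d ↔ d % p ∈ D.image (· % p) := by
  simp only [differenceProd, hp.prime.dvd_finsetProd_iff, mem_image, ← Int.natCast_dvd,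
    ← Nat.modEq_iff_dvd, Nat.ModEq]

end ResidueClasses

section LocalCoeff

/-- The Euler factor at `p` of the singular series of `D`. -/
noncomputable def localFactor (D : Finset ℕ) (p : ℕ) : ℝ :=
  ((1 - 1 / (p : ℝ)) ^ #D)⁻¹ * (1 - (nu D p : ℝ) / p)

/-- The coefficient `a(p, ν)`: adjoining `d` to `D` multiplies the Euler factor at `p` by
`1 + a(p, ν)`. The argument `ν` of the paper is `nu (insert d D) p`, which is encoded by whether
`d` occupies a new residue class modulo `p`. -/
noncomputable def localCoeff (D : Finset ℕ) (p d : ℕ) : ℝ :=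
  if d % p ∈ D.image (· % p) then 1 / ((p : ℝ) - 1)
  else -((nu D p : ℝ) / (((p : ℝ) - 1) * ((p : ℝ) - nu D p)))

variable {D : Finset ℕ} {p d : ℕ}

theorem localCoeff_periodic (D : Finset ℕ) (p : ℕ) : Periodic (localCoeff D p) p := fun d => by
  rw [localCoeff, Nat.add_mod_right, localCoeff]

theorem localFactor_insert (hp : p.Prime) (hν : nu D p < p) (hd : d ∉ D) :
    localFactor (insert d D) p = localFactor D p * (1 + localCoeff D p d) := by
  have hp_one : (p : ℝ) - 1 ≠ 0 := sub_ne_zero.2 (mod_cast hp.ne_one)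
  have hp_zero : (p : ℝ) ≠ 0 := mod_cast hp.ne_zero
  have hp_nu : (p : ℝ) - nu D p ≠ 0 := sub_ne_zero.2 (mod_cast hν.ne')
  have h_inv : (1 - 1 / (p : ℝ))⁻¹ = p / (p - 1) := by field_simp
  rw [localFactor, localFactor, nu_insert, card_insert_of_notMem hd, pow_succ, mul_inv, h_inv,
    mul_assoc, mul_assoc, localCoeff]
  congr 1
  split_ifs
  · field_simp
    ring
  · push_cast
    field_simp
    ring

theorem sum_localCoeff_eq_zero (hp : p.Prime) (hν : nu D p < p) :
    ∑ r ∈ range p, localCoeff D p r = 0 := by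
  have hp_nu : (p : ℝ) - nu D p ≠ 0 := sub_ne_zero.2 (mod_cast hν.ne')
  simp only [localCoeff]
  rw [sum_range_ite_mem_image_mod D hp.pos]
  field_simp
  ring

theorem abs_localCoeff (hp : p.Prime) (hν : nu D p < p) (d : ℕ) :
    |localCoeff D p d| = if d % p ∈ D.image (· % p) then 1 / ((p : ℝ) - 1)
      else (nu D p : ℝ) / (((p : ℝ) - 1) * ((p : ℝ) - nu D p)) := by
  have hp_one : 0 < (p : ℝ) - 1 := sub_pos.2 (mod_cast hp.one_lt)
  have hp_nu : 0 < (p : ℝ) - nu D p := sub_pos.2 (mod_cast hν)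
  rw [localCoeff]
  split_ifs
  · rw [abs_of_nonneg (by positivity)]
  · rw [abs_neg, abs_of_nonneg (by positivity)]

theorem sum_abs_localCoeff (hp : p.Prime) (hν : nu D p < p) :
    ∑ r ∈ range p, |localCoeff D p r| = 2 * nu D p * (1 / ((p : ℝ) - 1)) := by
  have hp_nu : (p : ℝ) - nu D p ≠ 0 := sub_ne_zero.2 (mod_cast hν.ne')
  simp only [abs_localCoeff hp hν]
  rw [sum_range_ite_mem_image_mod D hp.pos]
  field_simp
  ring

theorem abs_localCoeff_le_of_mem (hp : p.Prime) (hν : nu D p < p)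
    (hd : d % p ∈ D.image (· % p)) : |localCoeff D p d| ≤ 2 / p := by
  rw [abs_localCoeff hp hν, if_pos hd]
  exact one_div_sub_one_le (mod_cast hp.two_le)

theorem abs_localCoeff_le_of_notMem (hp : p.Prime) (hν : nu D p < p)
    (hd : d % p ∉ D.image (· % p)) : |localCoeff D p d| ≤ 2 * #D * (#D + 1) / (p : ℝ) ^ 2 := by
  have hp_two : (2 : ℝ) ≤ p := mod_cast hp.two_le
  have hν_lt : (nu D p : ℝ) + 1 ≤ p := mod_cast hν
  have hν_card : (nu D p : ℝ) ≤ #D := mod_cast nu_le_card D p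
  have h_one : (p : ℝ) ≤ 2 * (p - 1) := by linarith
  have h_nu : (p : ℝ) ≤ (#D + 1) * (p - nu D p) := by nlinarith
  rw [abs_localCoeff hp hν, if_neg hd, div_le_div_iff₀ (by nlinarith) (by nlinarith)]
  calc (nu D p : ℝ) * p ^ 2 = nu D p * (p * p) := by rw [sq]
    _ ≤ #D * ((2 * (p - 1)) * ((#D + 1) * (p - nu D p))) := by
        gcongr
        linarith
    _ = 2 * #D * (#D + 1) * ((p - 1) * (p - nu D p)) := by ring

theorem one_add_sqrt_mul_abs_localCoeff_le (hp : p.Prime) (hν : nu D p < p) (d : ℕ) :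
    1 + √p * |localCoeff D p d| ≤ (1 + 2 * #D * (#D + 1) * (p : ℝ) ^ (-(3 / 2) : ℝ)) *
      (if p ∣ differenceProd D d then 3 else 1) := by
  have hp_pos : (0 : ℝ) < p := mod_cast hp.pos
  simp only [prime_dvd_differenceProd_iff hp]
  split_ifs with hd
  · have h_sqrt : √p ≤ p := (Real.sqrt_le_left hp_pos.le).2 <|
      le_self_pow₀ (mod_cast hp.one_lt.le) two_ne_zero
    calc 1 + √p * |localCoeff D p d| ≤ 1 + p * (2 / p) := by
          gcongr
          exact abs_localCoeff_le_of_mem hp hν hd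
      _ = 1 * 3 := by rw [mul_div_cancel₀ _ hp_pos.ne']; norm_num
      _ ≤ _ := by
          gcongr
          exact le_add_of_nonneg_right (by positivity)
  · rw [mul_one, ← sqrt_div_sq_eq_rpow hp_pos, mul_div_left_comm]
    gcongr
    exact abs_localCoeff_le_of_notMem hp hν hd

end LocalCoeff

section SingularSeries

theorem summable_localFactor_sub_one (D : Finset ℕ) :
    Summable fun p : Nat.Primes => localFactor D p - 1 := by
  have h_summable : Summable fun p : Nat.Primes =>
      (#D : ℝ) ^ 2 * 2 ^ #D * (1 / ((p : ℕ) : ℝ)) ^ 2 := by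
    simp only [one_div_pow]
    exact ((Real.summable_one_div_nat_pow.2 one_lt_two).comp_injective
      Nat.Primes.coe_nat_injective).mul_left _
  refine h_summable.of_norm_bounded_eventually ?_
  have h_large : ∀ᶠ n : ℕ in cofinite, D.sup id < n := by
    rw [Nat.cofinite_eq_atTop]
    exact eventually_gt_atTop _
  filter_upwards [Nat.Primes.coe_nat_injective.tendsto_cofinite.eventually h_large] with p hp
  have hν : nu D p = #D := nu_eq_card_of_forall_lt fun d hd => (le_sup (f := id) hd).trans_lt hp
  have h_half : 1 / ((p : ℕ) : ℝ) ≤ 1 / 2 :=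
    one_div_le_one_div_of_le two_pos (mod_cast p.2.two_le)
  rw [Real.norm_eq_abs, localFactor, hν, div_eq_mul_one_div (#D : ℝ)]
  exact abs_inv_one_sub_pow_mul_sub_one_le #D (by positivity) h_half

theorem hasProd_localFactor (D : Finset ℕ) :
    HasProd (fun p : Nat.Primes => localFactor D p) (singSeries D) := by
  have h := Real.multipliable_one_add_of_summable (summable_localFactor_sub_one D)
  simp only [add_sub_cancel] at h
  exact h.hasProd

/-- Admissible sets, which leave a residue class free modulo every prime. -/
def IsAdmissible (D : Finset ℕ) : Prop := ∀ p : Nat.Primes, nu D p < p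

theorem isAdmissible_of_singSeries_ne_zero {D : Finset ℕ} (hD : singSeries D ≠ 0) :
    IsAdmissible D := by
  refine fun p => (nu_le D p.2.pos).lt_of_ne fun hν => hD ?_
  have h_factor : localFactor D p = 0 := by
    rw [localFactor, hν, div_self (mod_cast p.2.ne_zero), sub_self, mul_zero]
  exact (hasProd_localFactor D).unique (hasProd_zero_of_exists_eq_zero ⟨p, h_factor⟩)

end SingularSeries

section ModulusExpansion

/-- The squarefree modulus whose prime factors are the elements of `s`. -/
noncomputable def modulus (s : Finset Nat.Primes) : ℝ := ∏ p ∈ s, ((p : ℕ) : ℝ)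

/-- The contribution of the squarefree modulus `modulus s` to the expansion of
`∑ d ∈ Icc 1 H \ D, ∏ p ∈ T, (1 + localCoeff D p d)`, with the main term `H` taken out of the
modulus `1`. -/
noncomputable def modulusError (D : Finset ℕ) (H : ℕ) (s : Finset Nat.Primes) : ℝ :=
  ∑ d ∈ Icc 1 H \ D, ∏ p ∈ s, localCoeff D p d - if s = ∅ then (H : ℝ) else 0

variable {D : Finset ℕ}

theorem sum_prod_one_add_localCoeff_sub (D : Finset ℕ) (H : ℕ) (T : Finset Nat.Primes) :
    ∑ d ∈ Icc 1 H \ D, ∏ p ∈ T, (1 + localCoeff D p d) - H =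
      ∑ s ∈ T.powerset, modulusError D H s := by
  simp only [modulusError, sum_sub_distrib, prod_one_add]
  rw [sum_comm, sum_ite_eq' T.powerset ∅, if_pos (empty_mem_powerset T)]

theorem pairwise_coprime_primes (s : Set Nat.Primes) :
    s.Pairwise (Nat.Coprime on fun p : Nat.Primes => (p : ℕ)) := fun p _ q _ hpq =>
  (Nat.coprime_primes p.2 q.2).2 (Nat.Primes.coe_nat_injective.ne hpq)

theorem abs_sum_Icc_prod_localCoeff_le (hD : IsAdmissible D) {s : Finset Nat.Primes}
    (hs : s.Nonempty) (H : ℕ) :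
    |∑ d ∈ Icc 1 H, ∏ p ∈ s, localCoeff D p d| ≤
      2 * ∏ p ∈ s, (2 * nu D p * (1 / (((p : ℕ) : ℝ) - 1))) := by
  have h_periodic : Periodic (fun d => ∏ p ∈ s, localCoeff D p d) (∏ p ∈ s, (p : ℕ)) :=
    periodic_finset_prod fun p _ => localCoeff_periodic D p
  have h_mean : ∑ d ∈ range (∏ p ∈ s, (p : ℕ)), ∏ p ∈ s, localCoeff D p d = 0 := by
    rw [sum_range_prod_of_pairwise_coprime (pairwise_coprime_primes s)
      fun p _ => localCoeff_periodic D p]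
    obtain ⟨p, hp⟩ := hs
    exact prod_eq_zero hp (sum_localCoeff_eq_zero p.2 (hD p))
  have h_abs : ∑ d ∈ range (∏ p ∈ s, (p : ℕ)), |∏ p ∈ s, localCoeff D p d| =
      ∏ p ∈ s, (2 * nu D p * (1 / (((p : ℕ) : ℝ) - 1))) := by
    simp only [abs_prod]
    have h_abs_periodic : ∀ p ∈ s, Periodic (fun d => |localCoeff D p d|) (p : ℕ) :=
      fun p _ => (localCoeff_periodic D p).comp abs
    rw [sum_range_prod_of_pairwise_coprime (pairwise_coprime_primes s) h_abs_periodic]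
    exact prod_congr rfl fun p _ => sum_abs_localCoeff p.2 (hD p)
  rw [← h_abs]
  exact norm_sum_Icc_one_le_of_periodic (prod_pos fun p _ => p.2.pos) h_periodic h_mean H

theorem abs_sum_Icc_prod_localCoeff_sub_le (hD : IsAdmissible D) (H : ℕ) (s : Finset Nat.Primes) :
    |∑ d ∈ Icc 1 H, ∏ p ∈ s, localCoeff D p d - if s = ∅ then (H : ℝ) else 0| ≤
      2 * ∏ p ∈ s, ((4 * #D + 2) * ((p : ℕ) : ℝ)⁻¹) := by
  obtain rfl | hs := s.eq_empty_or_nonempty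
  · simp
  rw [if_neg hs.ne_empty, sub_zero]
  refine (abs_sum_Icc_prod_localCoeff_le hD hs H).trans ?_
  have hp_two : ∀ p : Nat.Primes, (2 : ℝ) ≤ (p : ℕ) := fun p => mod_cast p.2.two_le
  have h_nonneg : ∀ p : Nat.Primes, 0 ≤ 1 / (((p : ℕ) : ℝ) - 1) := fun p =>
    one_div_nonneg.2 (by linarith [hp_two p])
  refine mul_le_mul_of_nonneg_left (prod_le_prod
    (fun p _ => mul_nonneg (by positivity) (h_nonneg p)) fun p _ => ?_) two_pos.le
  calc 2 * (nu D p : ℝ) * (1 / (((p : ℕ) : ℝ) - 1)) ≤ 2 * #D * (2 / (p : ℕ)) := by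
        refine mul_le_mul ?_ (one_div_sub_one_le (hp_two p)) (h_nonneg p) (by positivity)
        gcongr
        exact nu_le_card D p
    _ = (4 * #D) * ((p : ℕ) : ℝ)⁻¹ := by ring
    _ ≤ (4 * #D + 2) * ((p : ℕ) : ℝ)⁻¹ := by
        gcongr
        linarith

theorem abs_sum_Icc_inter_prod_localCoeff_le (hD : IsAdmissible D) (H : ℕ)
    (s : Finset Nat.Primes) :
    |∑ d ∈ Icc 1 H ∩ D, ∏ p ∈ s, localCoeff D p d| ≤
      #D * ∏ p ∈ s, ((4 * #D + 2) * ((p : ℕ) : ℝ)⁻¹) := by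
  have h_term : ∀ d ∈ Icc 1 H ∩ D, |∏ p ∈ s, localCoeff D p d| ≤
      ∏ p ∈ s, ((4 * #D + 2) * ((p : ℕ) : ℝ)⁻¹) := by
    intro d hd
    rw [abs_prod]
    gcongr with p
    refine (abs_localCoeff_le_of_mem p.2 (hD p)
      (mem_image_of_mem _ (mem_of_mem_inter_right hd))).trans ?_
    rw [div_eq_mul_inv]
    gcongr
    exact le_add_of_nonneg_left (by positivity)
  refine (abs_sum_le_sum_abs _ _).trans ((sum_le_card_nsmul _ _ _ h_term).trans ?_)
  rw [nsmul_eq_mul]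
  gcongr
  exact inter_subset_right

theorem abs_modulusError_le (hD : IsAdmissible D) (H : ℕ) (s : Finset Nat.Primes) :
    |modulusError D H s| ≤ (#D + 2) * ∏ p ∈ s, ((4 * #D + 2) * ((p : ℕ) : ℝ)⁻¹) := by
  have h_split : modulusError D H s =
      (∑ d ∈ Icc 1 H, ∏ p ∈ s, localCoeff D p d - if s = ∅ then (H : ℝ) else 0) -
        ∑ d ∈ Icc 1 H ∩ D, ∏ p ∈ s, localCoeff D p d := by
    rw [modulusError, ← sum_inter_add_sum_sdiff (Icc 1 H) D]
    ring
  rw [h_split]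
  refine (abs_sub _ _).trans ((add_le_add (abs_sum_Icc_prod_localCoeff_sub_le hD H s)
    (abs_sum_Icc_inter_prod_localCoeff_le hD H s)).trans_eq ?_)
  ring

theorem exists_sum_small_abs_modulusError_le (k : ℕ) :
    ∃ M : ℝ, 0 < M ∧ ∀ (D : Finset ℕ) (H : ℕ) (T : Finset Nat.Primes), #D = k → IsAdmissible D →
      ∑ s ∈ T.powerset with modulus s ≤ H, |modulusError D H s| ≤ M * √H := by
  obtain ⟨M, hM, h_prod⟩ := exists_prod_one_add_mul_rpow_le
    (show (-(3 / 2) : ℝ) < -1 by norm_num) (show (0 : ℝ) ≤ 4 * k + 2 by positivity)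
  refine ⟨(k + 2) * M, by positivity, ?_⟩
  rintro D H T rfl hD
  have hp_pos : ∀ p : Nat.Primes, (0 : ℝ) < (p : ℕ) := fun p => mod_cast p.2.pos
  calc ∑ s ∈ T.powerset with modulus s ≤ H, |modulusError D H s|
      ≤ (#D + 2) * ∑ s ∈ T.powerset with modulus s ≤ H,
          ∏ p ∈ s, ((4 * #D + 2) * ((p : ℕ) : ℝ)⁻¹) := by
        rw [mul_sum]
        exact sum_le_sum fun s _ => abs_modulusError_le hD H s
    _ ≤ (#D + 2) * (√H * ∏ p ∈ T, (1 + (4 * #D + 2) * ((p : ℕ) : ℝ)⁻¹ / √(p : ℕ))) := by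
        gcongr
        exact sum_powerset_prod_le_le_sqrt_mul T hp_pos fun p => by positivity
    _ ≤ (#D + 2) * (√H * M) := by
        gcongr
        simpa only [mul_div_assoc, inv_div_sqrt_eq_rpow (hp_pos _)] using h_prod T
    _ = (#D + 2) * M * √H := by ring

theorem exists_prod_one_add_sqrt_mul_abs_localCoeff_le (k : ℕ) {ε : ℝ} (hε : 0 < ε) :
    ∃ M : ℝ, 0 < M ∧ ∀ (D : Finset ℕ) (d h : ℕ) (T : Finset Nat.Primes), #D = k →
      IsAdmissible D → (∀ e ∈ D, e ≤ h) → 1 ≤ h → d ≤ h → d ∉ D →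
        ∏ p ∈ T, (1 + √(p : ℕ) * |localCoeff D p d|) ≤ M * (h : ℝ) ^ ε := by
  obtain ⟨M, hM, h_prod⟩ := exists_prod_one_add_mul_rpow_le
    (show (-(3 / 2) : ℝ) < -1 by norm_num) (show (0 : ℝ) ≤ 2 * k * (k + 1) by positivity)
  obtain ⟨N, hN, h_omega⟩ := exists_pow_card_primeFactors_le
    (show (1 : ℝ) ≤ 3 by norm_num) (show 0 < ε / (k + 1) by positivity)
  refine ⟨M * N, by positivity, ?_⟩
  rintro D d h T rfl hD hDh hh hdh hd
  have h_diff : (differenceProd D d : ℝ) ^ (ε / (#D + 1)) ≤ (h : ℝ) ^ ε := by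
    calc (differenceProd D d : ℝ) ^ (ε / (#D + 1)) ≤ ((h : ℝ) ^ #D) ^ (ε / (#D + 1)) := by
          gcongr
          exact_mod_cast differenceProd_le_pow hDh hdh
      _ = (h : ℝ) ^ (#D * (ε / (#D + 1))) := by
          rw [← Real.rpow_natCast, ← Real.rpow_mul h.cast_nonneg]
      _ ≤ (h : ℝ) ^ ε := by
          refine Real.rpow_le_rpow_of_exponent_le (mod_cast hh) ?_
          rw [mul_div_assoc', div_le_iff₀ (by positivity)]
          nlinarith
  calc ∏ p ∈ T, (1 + √(p : ℕ) * |localCoeff D p d|)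
      ≤ ∏ p ∈ T, ((1 + 2 * #D * (#D + 1) * ((p : ℕ) : ℝ) ^ (-(3 / 2) : ℝ)) *
          (if (p : ℕ) ∣ differenceProd D d then 3 else 1)) := by
        gcongr with p
        exact one_add_sqrt_mul_abs_localCoeff_le p.2 (hD p) d
    _ ≤ M * 3 ^ #(differenceProd D d).primeFactors := by
        rw [prod_mul_distrib]
        gcongr
        · exact h_prod T
        · exact prod_ite_dvd_le_pow_card_primeFactors (by norm_num) (differenceProd_ne_zero hd) T
    _ ≤ M * (N * (h : ℝ) ^ ε) := by
        gcongr
        exact (h_omega _ (differenceProd_ne_zero hd)).trans (by gcongr)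
    _ = M * N * (h : ℝ) ^ ε := (mul_assoc _ _ _).symm

theorem abs_modulusError_le_sum_prod_abs {H : ℕ} {s : Finset Nat.Primes} (hs : s.Nonempty) :
    |modulusError D H s| ≤ ∑ d ∈ Icc 1 H \ D, ∏ p ∈ s, |localCoeff D p d| := by
  rw [modulusError, if_neg hs.ne_empty, sub_zero]
  simpa only [abs_prod] using abs_sum_le_sum_abs (fun d => ∏ p ∈ s, localCoeff D p d) _

theorem exists_sum_large_abs_modulusError_le (k : ℕ) {ε : ℝ} (hε : 0 < ε) :
    ∃ M : ℝ, 0 < M ∧ ∀ (D : Finset ℕ) (h H : ℕ) (T : Finset Nat.Primes), #D = k →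
      IsAdmissible D → (∀ d ∈ D, d ≤ h) → 1 ≤ H → H ≤ h →
        ∑ s ∈ T.powerset with H < modulus s, |modulusError D H s| ≤
          M * (h : ℝ) ^ ε * √H := by
  obtain ⟨M, hM, h_prod⟩ := exists_prod_one_add_sqrt_mul_abs_localCoeff_le k hε
  refine ⟨M, hM, fun D h H T hDk hD hDh hH hHh => ?_⟩
  have h_nonempty : ∀ s ∈ {s ∈ T.powerset | H < modulus s}, s.Nonempty := by
    intro s hs
    rw [nonempty_iff_ne_empty]
    rintro rfl
    have hH_lt : (H : ℝ) < 1 := by simpa only [modulus, prod_empty] using (mem_filter.1 hs).2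
    exact hH_lt.not_ge (mod_cast hH)
  have h_shift : ∀ d ∈ Icc 1 H \ D,
      √H * ∑ s ∈ T.powerset with H < modulus s,
        ∏ p ∈ s, |localCoeff D p d| ≤ M * (h : ℝ) ^ ε := by
    intro d hd
    obtain ⟨hd_Icc, hd_notMem⟩ := mem_sdiff.1 hd
    exact (sqrt_mul_sum_powerset_lt_prod_le T (fun p => Nat.cast_nonneg _)
      fun p => abs_nonneg _).trans <| h_prod D d h T hDk hD hDh (hH.trans hHh)
        ((mem_Icc.1 hd_Icc).2.trans hHh) hd_notMem
  have hH_sqrt : 0 < √(H : ℝ) := Real.sqrt_pos.2 (mod_cast hH)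
  refine le_of_mul_le_mul_left ?_ hH_sqrt
  calc √H * ∑ s ∈ T.powerset with H < modulus s, |modulusError D H s|
      ≤ √H * ∑ s ∈ T.powerset with H < modulus s,
          ∑ d ∈ Icc 1 H \ D, ∏ p ∈ s, |localCoeff D p d| := by
        gcongr with s hs
        exact abs_modulusError_le_sum_prod_abs (h_nonempty s hs)
    _ = ∑ d ∈ Icc 1 H \ D, √H * ∑ s ∈ T.powerset with H < modulus s,
          ∏ p ∈ s, |localCoeff D p d| := by rw [sum_comm, mul_sum]
    _ ≤ #(Icc 1 H \ D) * (M * (h : ℝ) ^ ε) := by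
        simpa only [nsmul_eq_mul] using sum_le_card_nsmul _ _ _ h_shift
    _ ≤ H * (M * (h : ℝ) ^ ε) := by
        gcongr
        simpa only [Nat.card_Icc, add_tsub_cancel_right] using
          card_le_card (sdiff_subset : Icc 1 H \ D ⊆ Icc 1 H)
    _ = √H * (M * (h : ℝ) ^ ε * √H) := by
        linear_combination (-(M * (h : ℝ) ^ ε)) * Real.mul_self_sqrt (Nat.cast_nonneg (α := ℝ) H)

theorem exists_abs_sum_prod_one_add_localCoeff_sub_le (k : ℕ) {ε : ℝ} (hε : 0 < ε) :
    ∃ C : ℝ, 0 < C ∧ ∀ (D : Finset ℕ) (h H : ℕ) (T : Finset Nat.Primes), #D = k →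
      IsAdmissible D → (∀ d ∈ D, d ≤ h) → 1 ≤ H → H ≤ h →
        |∑ d ∈ Icc 1 H \ D, ∏ p ∈ T, (1 + localCoeff D p d) - H| ≤ C * (h : ℝ) ^ ε * √H := by
  obtain ⟨M, hM, h_small⟩ := exists_sum_small_abs_modulusError_le k
  obtain ⟨N, hN, h_large⟩ := exists_sum_large_abs_modulusError_le k hε
  refine ⟨M + N, by positivity, fun D h H T hDk hD hDh hH hHh => ?_⟩
  have hh_one : 1 ≤ (h : ℝ) ^ ε := Real.one_le_rpow (mod_cast hH.trans hHh) hε.le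
  rw [sum_prod_one_add_localCoeff_sub]
  calc |∑ s ∈ T.powerset, modulusError D H s|
      ≤ ∑ s ∈ T.powerset, |modulusError D H s| := abs_sum_le_sum_abs _ _
    _ = ∑ s ∈ T.powerset with modulus s ≤ H, |modulusError D H s| +
          ∑ s ∈ T.powerset with H < modulus s, |modulusError D H s| := by
        simp only [← not_le, sum_filter_add_sum_filter_not]
    _ ≤ M * √H * 1 + N * (h : ℝ) ^ ε * √H := by
        rw [mul_one]
        exact add_le_add (h_small D H T hDk hD) (h_large D h H T hDk hD hDh hH hHh)
    _ ≤ M * √H * (h : ℝ) ^ ε + N * (h : ℝ) ^ ε * √H := by gcongr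
    _ = (M + N) * (h : ℝ) ^ ε * √H := by ring

theorem sum_prod_localFactor_insert_sub (hD : IsAdmissible D) (H : ℕ) (T : Finset Nat.Primes) :
    ∑ d ∈ Icc 1 H \ D, ∏ p ∈ T, localFactor (insert d D) p - (∏ p ∈ T, localFactor D p) * H =
      (∏ p ∈ T, localFactor D p) *
        (∑ d ∈ Icc 1 H \ D, ∏ p ∈ T, (1 + localCoeff D p d) - H) := by
  rw [mul_sub, mul_sum]
  congr 1
  refine sum_congr rfl fun d hd => ?_
  rw [← prod_mul_distrib]
  exact prod_congr rfl fun p _ => localFactor_insert p.2 (hD p) (mem_sdiff.1 hd).2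

end ModulusExpansion

/-- the singular series average `∑_{1≤d_0≤H, d_0∉D_k} S(D_k∪{d_0})
 = S(D_k)·H·(1 + O_k(h^ε/H^{1/2}))`. -/
theorem stmt12 (k : ℕ) (ε : ℝ) (hε : 0 < ε) :
    ∃ C : ℝ, 0 < C ∧ ∀ (h H : ℕ) (D : Finset ℕ), D.card = k →
      (∀ d ∈ D, d ≤ h) → 1 ≤ H → H ≤ h → singSeries D ≠ 0 →
      |(∑ d0 ∈ Finset.Icc 1 H \ D, singSeries (insert d0 D)) - singSeries D * H| ≤
        C * |singSeries D| * (h : ℝ) ^ ε * (H : ℝ) / Real.sqrt H := by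
  obtain ⟨C, hC, h_finite⟩ := exists_abs_sum_prod_one_add_localCoeff_sub_le k hε
  refine ⟨C, hC, fun h H D hDk hDh hH hHh hS => ?_⟩
  have hD : IsAdmissible D := isAdmissible_of_singSeries_ne_zero hS
  have h_lim : Tendsto (fun T : Finset Nat.Primes => ∏ p ∈ T, localFactor D p) atTop
      (𝓝 (singSeries D)) := hasProd_localFactor D
  have h_lim_insert : ∀ d ∈ Icc 1 H \ D, Tendsto (fun T : Finset Nat.Primes =>
      ∏ p ∈ T, localFactor (insert d D) p) atTop (𝓝 (singSeries (insert d D))) :=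
    fun d _ => hasProd_localFactor (insert d D)
  have h_bound : C * |singSeries D| * (h : ℝ) ^ ε * (H : ℝ) / √H =
      |singSeries D| * (C * (h : ℝ) ^ ε * √H) := by
    rw [mul_div_assoc, Real.div_sqrt]
    ring
  rw [h_bound]
  refine le_of_tendsto_of_tendsto' ((tendsto_finsetSum _ h_lim_insert).sub
    (h_lim.mul_const (H : ℝ))).abs (h_lim.abs.mul_const _) fun T => ?_
  rw [sum_prod_localFactor_insert_sub hD, abs_mul]
  exact mul_le_mul_of_nonneg_left (h_finite D h H T hDk hD hDh hH hHh) (abs_nonneg _)
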